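/- Let c > 0 and 0 < R_Sch < R_ID be constants. Let a : [0,∞) → ℝ be continuously differentiable with a(t) > 0 and a′(t) > 0 for all t ≥ 0, and suppose A(t) := ∫₀ᵗ a(s)⁻¹ ds satisfies sup_{t ≥ 0} A(t) < ∞. Then there exist ε > 0 and a unique continuous function r : [0,∞) → ℝ with r(0) = R_ID and R_Sch < r(t) ≤ R_ID for all t, such that R_ID − r(t) − R_Sch·ln(1 − (R_ID − r(t))/(R_ID − R_Sch)) = c·A(t) for all t ∈ [0,∞); moreover r(t) ≥ R_Sch + ε for all t ≥ 0. -/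

import Mathlib

/-!
The left-hand side of the implicit equation is the tortoise distance from `r t` to `RID`. Its
logarithmic term is antitone in the radius, so it decreases at least as fast as `-x`: outside the
horizon distinct radii are at least as far apart in tortoise distance as in radius. Hence it is
injective there, which gives uniqueness, and its inverse is `1`-Lipschitz, so that `r` is as
continuous as `A`. At the point `RSch + (RID - RSch) * exp (-M / RSch)` the logarithm alone
contributes `M`, so the intermediate value theorem solves the equation for every value in `[0, M]`
without going below that point; the bound on `A` allows a single `M` for all times.
-/

open Set MeasureTheory
open scoped Topology

/-- The tortoise distance from the radius `x` to `RID`: the difference `RID⋆ - x⋆` of the values of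
the tortoise coordinate `x⋆ = x + RSch * log (x / RSch - 1)`, with `(x - RSch) / (RID - RSch)`
written as in the implicit equation of the geodesic. It is meaningful for `RSch < x`; at and below
the horizon it takes the junk values of `Real.log`. -/
noncomputable def tortoiseDistance (RSch RID x : ℝ) : ℝ :=
  RID - x - RSch * Real.log (1 - (RID - x) / (RID - RSch))

section TortoiseDistance

variable {RSch RID : ℝ}

@[simp]
lemma tortoiseDistance_self (RSch RID : ℝ) : tortoiseDistance RSch RID RID = 0 := by
  simp [tortoiseDistance]

lemma tortoiseDistance_eq_sub_log_div (hne : RSch ≠ RID) (x : ℝ) :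
    tortoiseDistance RSch RID x = RID - x - RSch * Real.log ((x - RSch) / (RID - RSch)) := by
  have : RID - RSch ≠ 0 := sub_ne_zero.2 hne.symm
  have : 1 - (RID - x) / (RID - RSch) = (x - RSch) / (RID - RSch) := by
    field_simp
    ring
  rw [tortoiseDistance, this]

lemma sub_le_tortoiseDistance_sub (hRSch : 0 ≤ RSch) (hRID : RSch < RID) {x y : ℝ}
    (hx : RSch < x) (hxy : x ≤ y) :
    y - x ≤ tortoiseDistance RSch RID x - tortoiseDistance RSch RID y := by
  have hgap : 0 < RID - RSch := sub_pos.2 hRID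
  have hlog : RSch * Real.log ((x - RSch) / (RID - RSch)) ≤
      RSch * Real.log ((y - RSch) / (RID - RSch)) := by
    have : 0 < (x - RSch) / (RID - RSch) := div_pos (sub_pos.2 hx) hgap
    gcongr
  simp only [tortoiseDistance_eq_sub_log_div hRID.ne]
  linarith

lemma antilipschitzWith_tortoiseDistance (hRSch : 0 ≤ RSch) (hRID : RSch < RID) :
    AntilipschitzWith 1 ((Ioi RSch).domRestrict (tortoiseDistance RSch RID)) := by
  refine AntilipschitzWith.of_le_mul_dist fun ⟨x, hx⟩ ⟨y, hy⟩ => ?_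
  simp only [NNReal.coe_one, one_mul, Subtype.dist_eq, domRestrict_apply]
  wlog hxy : x ≤ y generalizing x y
  · simpa only [dist_comm] using this y hy x hx (le_of_not_ge hxy)
  rw [dist_comm, Real.dist_eq, Real.dist_eq, abs_of_nonneg (sub_nonneg.2 hxy)]
  exact (sub_le_tortoiseDistance_sub hRSch hRID hx hxy).trans (le_abs_self _)

lemma injOn_tortoiseDistance (hRSch : 0 ≤ RSch) (hRID : RSch < RID) :
    InjOn (tortoiseDistance RSch RID) (Ioi RSch) :=
  injOn_iff_injective.2 (antilipschitzWith_tortoiseDistance hRSch hRID).injective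

lemma continuousOn_tortoiseDistance (hne : RSch ≠ RID) :
    ContinuousOn (tortoiseDistance RSch RID) (Ioi RSch) := by
  simp only [funext (tortoiseDistance_eq_sub_log_div hne)]
  have hlog : ContinuousOn (fun x => Real.log ((x - RSch) / (RID - RSch))) (Ioi RSch) :=
    ContinuousOn.log (by fun_prop) fun x hx =>
      div_ne_zero (sub_pos.2 hx).ne' (sub_ne_zero.2 hne.symm)
  fun_prop

lemma tortoiseDistance_add_mul_exp (hRSch : RSch ≠ 0) (hne : RSch ≠ RID) (M : ℝ) :
    tortoiseDistance RSch RID (RSch + (RID - RSch) * Real.exp (-M / RSch)) =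
      (RID - RSch) * (1 - Real.exp (-M / RSch)) + M := by
  rw [tortoiseDistance_eq_sub_log_div hne, add_sub_cancel_left,
    mul_div_cancel_left₀ _ (sub_ne_zero.2 hne.symm), Real.log_exp, mul_div_cancel₀ _ hRSch]
  ring

lemma surjOn_tortoiseDistance (hRSch : 0 < RSch) (hRID : RSch < RID) (M : ℝ) :
    SurjOn (tortoiseDistance RSch RID)
      (Icc (RSch + (RID - RSch) * Real.exp (-M / RSch)) RID) (Icc 0 M) := by
  intro y hy
  have hM : 0 ≤ M := hy.1.trans hy.2
  have hgap : 0 < RID - RSch := sub_pos.2 hRID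
  have hexp : Real.exp (-M / RSch) ≤ 1 :=
    Real.exp_le_one_iff.2 (div_nonpos_of_nonpos_of_nonneg (neg_nonpos.2 hM) hRSch.le)
  set x₀ := RSch + (RID - RSch) * Real.exp (-M / RSch) with hx₀
  have hx₀_gt : RSch < x₀ := lt_add_of_pos_right _ (by positivity)
  have hx₀_le : x₀ ≤ RID := by linarith [mul_le_of_le_one_right hgap.le hexp]
  have hM_le : M ≤ tortoiseDistance RSch RID x₀ := by
    rw [hx₀, tortoiseDistance_add_mul_exp hRSch.ne' hRID.ne]
    exact le_add_of_nonneg_left (mul_nonneg hgap.le (sub_nonneg.2 hexp))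
  have hcont : ContinuousOn (tortoiseDistance RSch RID) (Icc x₀ RID) :=
    (continuousOn_tortoiseDistance hRID.ne).mono fun x hx => hx₀_gt.trans_le hx.1
  refine intermediate_value_Icc' hx₀_le hcont ⟨?_, hy.2.trans hM_le⟩
  simpa only [tortoiseDistance_self] using hy.1

lemma exists_lipschitzOnWith_rightInvOn_tortoiseDistance (hRSch : 0 < RSch) (hRID : RSch < RID)
    (M : ℝ) :
    ∃ g : ℝ → ℝ, LipschitzOnWith 1 g (Icc 0 M) ∧
      MapsTo g (Icc 0 M) (Icc (RSch + (RID - RSch) * Real.exp (-M / RSch)) RID) ∧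
      RightInvOn g (tortoiseDistance RSch RID) (Icc 0 M) := by
  have hsurj := surjOn_tortoiseDistance hRSch hRID M
  have hIoi : Icc (RSch + (RID - RSch) * Real.exp (-M / RSch)) RID ⊆ Ioi RSch := fun x hx =>
    (lt_add_of_pos_right _ (mul_pos (sub_pos.2 hRID) (Real.exp_pos _))).trans_le hx.1
  exact ⟨_, lipschitzOnWith_iff_restrict.2
    ((antilipschitzWith_tortoiseDistance hRSch.le hRID).to_rightInvOn'
      (hsurj.mapsTo_invFunOn.mono_right hIoi) hsurj.rightInvOn_invFunOn),
    hsurj.mapsTo_invFunOn, hsurj.rightInvOn_invFunOn⟩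

end TortoiseDistance

lemma continuousOn_primitive_Ici {E : Type*} [NormedAddCommGroup E] [NormedSpace ℝ E]
    {μ : Measure ℝ} [NullSingletonClass μ] {f : ℝ → E} {a : ℝ}
    (hf : LocallyIntegrableOn f (Ici a) μ) :
    ContinuousOn (fun t => ∫ s in a..t, f s ∂μ) (Ici a) := by
  intro t ht
  have hle : a ≤ t + 1 := by linarith [mem_Ici.1 ht]
  have hint : IntegrableOn f (uIcc a (t + 1)) μ :=
    hf.integrableOn_compact_subset (by simp [uIcc_of_le hle, Icc_subset_Ici_self]) isCompact_uIcc
  have hcont := intervalIntegral.continuousOn_primitive_interval hint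
  rw [uIcc_of_le hle] at hcont
  have hnhds : Icc a (t + 1) ∈ 𝓝[Ici a] t :=
    Filter.inter_mem self_mem_nhdsWithin (mem_nhdsWithin_of_mem_nhds (Iic_mem_nhds (lt_add_one t)))
  exact (hcont t ⟨ht, (lt_add_one t).le⟩).mono_of_mem_nhdsWithin hnhds

theorem null_geodesic_global_existence_general
    {c RSch RID : ℝ} (hc : 0 ≤ c) (hRSch : 0 < RSch) (hRID : RSch < RID) {a : ℝ → ℝ}
    (ha : LocallyIntegrableOn (fun t => (a t)⁻¹) (Ici 0)) (hapos : ∀ t ∈ Ici (0 : ℝ), 0 < a t)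
    {A : ℝ → ℝ} (hA : ∀ t ∈ Ici (0 : ℝ), A t = ∫ s in (0 : ℝ)..t, (a s)⁻¹)
    (hbdd : ∃ B : ℝ, ∀ t ∈ Ici (0 : ℝ), A t ≤ B) :
    ∃ ε > (0 : ℝ), ∃ r : ℝ → ℝ,
      (ContinuousOn r (Ici 0) ∧ r 0 = RID ∧ (∀ t ∈ Ici (0 : ℝ), RSch < r t ∧ r t ≤ RID) ∧
        ∀ t ∈ Ici (0 : ℝ), tortoiseDistance RSch RID (r t) = c * A t) ∧
      (∀ r' : ℝ → ℝ,
        (∀ t ∈ Ici (0 : ℝ), RSch < r' t ∧ tortoiseDistance RSch RID (r' t) = c * A t) →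
        EqOn r' r (Ici 0)) ∧
      ∀ t ∈ Ici (0 : ℝ), RSch + ε ≤ r t := by
  obtain ⟨B, hB⟩ := hbdd
  have hcA : MapsTo (fun t => c * A t) (Ici 0) (Icc 0 (c * B)) := fun t ht => by
    have hA_nonneg : 0 ≤ A t := hA t ht ▸
      intervalIntegral.integral_nonneg ht fun s hs => (inv_pos.2 (hapos s hs.1)).le
    exact ⟨mul_nonneg hc hA_nonneg, mul_le_mul_of_nonneg_left (hB t ht) hc⟩
  have hcA_cont : ContinuousOn (fun t => c * A t) (Ici 0) :=
    continuousOn_const.mul ((continuousOn_primitive_Ici ha).congr hA)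
  obtain ⟨g, hg_lip, hg_maps, hg_inv⟩ :=
    exists_lipschitzOnWith_rightInvOn_tortoiseDistance hRSch hRID (c * B)
  have hε : 0 < (RID - RSch) * Real.exp (-(c * B) / RSch) :=
    mul_pos (sub_pos.2 hRID) (Real.exp_pos _)
  have hgt : ∀ t ∈ Ici (0 : ℝ), RSch < g (c * A t) := fun t ht =>
    (lt_add_of_pos_right _ hε).trans_le (hg_maps (hcA ht)).1
  have hinj := injOn_tortoiseDistance hRSch.le hRID
  refine ⟨_, hε, fun t => g (c * A t), ⟨hg_lip.continuousOn.comp hcA_cont hcA, ?_,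
    fun t ht => ⟨hgt t ht, (hg_maps (hcA ht)).2⟩, fun t ht => hg_inv (hcA ht)⟩,
    fun r' hr' t ht => hinj (hr' t ht).1 (hgt t ht) ((hr' t ht).2.trans (hg_inv (hcA ht)).symm),
    fun t ht => (hg_maps (hcA ht)).1⟩
  refine hinj (hgt 0 self_mem_Ici) hRID ((hg_inv (hcA self_mem_Ici)).trans ?_)
  simp [hA 0 self_mem_Ici]

/-- global existence of the ingoing null radial geodesic, given implicitly by
`R_ID − r − R_Sch ln(1 − (R_ID − r)/(R_ID − R_Sch)) = c·A(t)`, which stays a positive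
distance `ε` away from the event horizon `r = R_Sch` for all time. Uniqueness is among
continuous functions on `[0,∞)` (agreement on `[0,∞)`). -/
theorem null_geodesic_global_existence
    (c RSch RID : ℝ) (hc : 0 < c) (hRSch : 0 < RSch) (hRID : RSch < RID)
    (a a' : ℝ → ℝ)
    (ha : ∀ t ∈ Set.Ici (0:ℝ), HasDerivWithinAt a (a' t) (Set.Ici 0) t)
    (ha'cont : ContinuousOn a' (Set.Ici 0))
    (hapos : ∀ t ∈ Set.Ici (0:ℝ), 0 < a t)
    (ha'pos : ∀ t ∈ Set.Ici (0:ℝ), 0 < a' t)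
    (A : ℝ → ℝ) (hA : ∀ t, A t = ∫ s in (0:ℝ)..t, (a s)⁻¹)
    (hbdd : ∃ B : ℝ, ∀ t ∈ Set.Ici (0:ℝ), A t ≤ B) :
    ∃ ε > (0:ℝ), ∃ r : ℝ → ℝ,
      (ContinuousOn r (Set.Ici 0) ∧ r 0 = RID ∧
        (∀ t ∈ Set.Ici (0:ℝ), RSch < r t ∧ r t ≤ RID) ∧
        (∀ t ∈ Set.Ici (0:ℝ),
          RID - r t - RSch * Real.log (1 - (RID - r t) / (RID - RSch)) = c * A t)) ∧
      (∀ r' : ℝ → ℝ,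
        (ContinuousOn r' (Set.Ici 0) ∧ r' 0 = RID ∧
          (∀ t ∈ Set.Ici (0:ℝ), RSch < r' t ∧ r' t ≤ RID) ∧
          (∀ t ∈ Set.Ici (0:ℝ),
            RID - r' t - RSch * Real.log (1 - (RID - r' t) / (RID - RSch)) = c * A t)) →
        Set.EqOn r' r (Set.Ici 0)) ∧
      (∀ t ∈ Set.Ici (0:ℝ), RSch + ε ≤ r t) := by
  have hinv : ContinuousOn (fun t => (a t)⁻¹) (Ici 0) :=
    ContinuousOn.inv₀ (fun t ht => (ha t ht).continuousWithinAt) fun t ht => (hapos t ht).ne'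
  obtain ⟨ε, hε, r, hr, huniq, hlow⟩ := null_geodesic_global_existence_general hc.le hRSch hRID
    (hinv.locallyIntegrableOn measurableSet_Ici) hapos (fun t _ => hA t) hbdd
  exact ⟨ε, hε, r, hr, fun r' ⟨_, _, hr'_mem, hr'_eq⟩ =>
    huniq r' fun t ht => ⟨(hr'_mem t ht).1, hr'_eq t ht⟩, hlow⟩
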